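/- Let U = U_m ∘ ⋯ ∘ U_1 : H × H → H × H and let γ ∈ ℝ. Then ‖U − γ Id‖² = (1/2) sup_{p ∈ ℕ} ( (β_{1,m,p} − γ)² + (η_{1,m} − γ)² + β̃_{1,m,p}² + √( ( (β_{1,m,p} − γ)² + (η_{1,m} − γ)² + β̃_{1,m,p}² )² − 4 (β_{1,m,p} − γ)² (η_{1,m} − γ)² ) ), where ‖·‖ is the operator norm on H × H. -/

import Mathlib

/-!
In the coordinates of the basis, `T = U - γ Id` is block diagonal: on the pair of `p`-th
coordinates of `(x, b)` it acts as the upper triangular matrix `M_p = !![a, t; 0, d]` with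
`a = β_{1,m,p} - γ`, `t = β̃_{1,m,p}`, `d = η_{1,m} - γ` (`inner_opComp`, by induction on the number
of factors). The largest eigenvalue of `M_pᵀ M_p` is half of the `p`-th term of the supremum:
`quad_le` shows that it bounds the quadratic form `|M_p (x, b)|²`, and `exists_quad_eq` that
the bound is attained. Summing over `p` by Parseval bounds `‖T‖²` above by the supremum, and
testing `T` on `(x v_p, b v_p)` bounds every term, hence the supremum, by `‖T‖²`. The second
estimate also shows that the supremum is taken over a bounded set.
-/

noncomputable section

open Finset

variable {H : Type*} [NormedAddCommGroup H] [InnerProductSpace ℝ H]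

/-- Build the pair `(x, b)` in the `ℓ²` product space `H × H`. -/
def mkP (x b : H) : WithLp 2 (H × H) := (WithLp.equiv 2 (H × H)).symm (x, b)

/-- First component of an element of the product space. -/
def fstP (z : WithLp 2 (H × H)) : H := (WithLp.equiv 2 (H × H) z).1

/-- Second component of an element of the product space. -/
def sndP (z : WithLp 2 (H × H)) : H := (WithLp.equiv 2 (H × H) z).2

/-- `(x, b) ↦ x` as a continuous linear map on the `ℓ²` product. -/
def fstL : WithLp 2 (H × H) →L[ℝ] H :=
  (ContinuousLinearMap.fst ℝ H H).comp
    (WithLp.prodContinuousLinearEquiv 2 ℝ H H).toContinuousLinearMap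

/-- `(x, b) ↦ b` as a continuous linear map on the `ℓ²` product. -/
def sndL : WithLp 2 (H × H) →L[ℝ] H :=
  (ContinuousLinearMap.snd ℝ H H).comp
    (WithLp.prodContinuousLinearEquiv 2 ℝ H H).toContinuousLinearMap

/-- `Uₙ(x, b) = (Wₙ x + λₙ b, ηₙ b)` as a continuous linear map on the product space. -/
def Uop (W : ℕ → H →L[ℝ] H) (lam eta : ℕ → ℝ) (n : ℕ) :
    WithLp 2 (H × H) →L[ℝ] WithLp 2 (H × H) :=
  ((WithLp.prodContinuousLinearEquiv 2 ℝ H H).symm.toContinuousLinearMap).comp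
    (((((W n).comp (ContinuousLinearMap.fst ℝ H H)) + lam n • (ContinuousLinearMap.snd ℝ H H)).prod
        (eta n • (ContinuousLinearMap.snd ℝ H H))).comp
      (WithLp.prodContinuousLinearEquiv 2 ℝ H H).toContinuousLinearMap)

/-- Composition `Aₙ ∘ ⋯ ∘ Aᵢ` (the identity when `n < i`, i.e. when the composition is empty). -/
def opComp {E : Type*} [NormedAddCommGroup E] [NormedSpace ℝ E]
    (A : ℕ → E →L[ℝ] E) (i : ℕ) : ℕ → (E →L[ℝ] E)
  | 0 => 1
  | n + 1 => if n + 1 < i then 1 else (A (n + 1)).comp (opComp A i n)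

/-- `η_{i,j} = η_j ⋯ η_i` if `j ≥ i`, and `1` otherwise. -/
def etaP (eta : ℕ → ℝ) (i j : ℕ) : ℝ := ∏ k ∈ Finset.Icc i j, eta k

/-- `β_{i,n,p} = ∏_{j=i}^n β_p^{(j)}`. -/
def betaC (beta : ℕ → ℕ → ℝ) (i n p : ℕ) : ℝ := ∏ j ∈ Finset.Icc i n, beta j p

/-- `β̃_{i,n,p} = Σ_{j=i}^{n−1} (∏_{l=j+1}^n β_p^{(l)}) λ_j η_{i,j−1} + λ_n η_{i,n−1}`. -/
def betaT (beta : ℕ → ℕ → ℝ) (lam eta : ℕ → ℝ) (i n p : ℕ) : ℝ :=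
  (∑ j ∈ Finset.Icc i (n - 1), (∏ l ∈ Finset.Icc (j + 1) n, beta l p) * lam j * etaP eta i (j - 1))
    + lam n * etaP eta i (n - 1)

/-- The operator `W̃_{i,n} = Σ_{j=i}^{n−1} λ_j η_{i,j−1} (Wₙ ∘ ⋯ ∘ W_{j+1}) + λ_n η_{i,n−1} Id`. -/
def Wt (W : ℕ → H →L[ℝ] H) (lam eta : ℕ → ℝ) (i n : ℕ) : H →L[ℝ] H :=
  (∑ j ∈ Finset.Icc i (n - 1), (lam j * etaP eta i (j - 1)) • opComp W (j + 1) n)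
    + (lam n * etaP eta i (n - 1)) • (1 : H →L[ℝ] H)

/-- `a_{i,n}`. -/
def aC (beta : ℕ → ℕ → ℝ) (lam eta : ℕ → ℝ) (i n : ℕ) : ℝ :=
  (1 / 2) * ⨆ p : ℕ,
    (betaC beta i n p ^ 2 + betaT beta lam eta i n p ^ 2 + etaP eta i n ^ 2
      + Real.sqrt ((betaC beta i n p ^ 2 + betaT beta lam eta i n p ^ 2 + etaP eta i n ^ 2) ^ 2
          - 4 * betaC beta i n p ^ 2 * etaP eta i n ^ 2))

/-- `ā_{i,n} = sup_p (β_{i,n,p}² + β̃_{i,n,p}²)`. -/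
def aBar (beta : ℕ → ℕ → ℝ) (lam eta : ℕ → ℝ) (i n : ℕ) : ℝ :=
  ⨆ p : ℕ, (betaC beta i n p ^ 2 + betaT beta lam eta i n p ^ 2)

/-- `Qₙ(x, b) = (Rₙ x, b)`. -/
def Qop (R : ℕ → H → H) (n : ℕ) (z : WithLp 2 (H × H)) : WithLp 2 (H × H) :=
  mkP (R n (fstP z)) (sndP z)

/-- The virtual network `Qₙ ∘ Uₙ ∘ ⋯ ∘ Q₁ ∘ U₁`. -/
def net (U : ℕ → WithLp 2 (H × H) →L[ℝ] WithLp 2 (H × H))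
    (Q : ℕ → WithLp 2 (H × H) → WithLp 2 (H × H)) :
    ℕ → (WithLp 2 (H × H) → WithLp 2 (H × H))
  | 0 => id
  | n + 1 => fun z => Q (n + 1) (U (n + 1) (net U Q n z))

/-- `Ū_m (x, b) = W_m x + λ_m b` as a continuous linear map to `H`. -/
def Ubar (W : ℕ → H →L[ℝ] H) (lam : ℕ → ℝ) (m : ℕ) : WithLp 2 (H × H) →L[ℝ] H :=
  ((W m).comp fstL) + lam m • sndL

/-- `Û₁ b = (λ₁ b, η₁ b)`. -/
def Uhat1a (lam eta : ℕ → ℝ) : H →L[ℝ] WithLp 2 (H × H) :=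
  ((WithLp.prodContinuousLinearEquiv 2 ℝ H H).symm.toContinuousLinearMap).comp
    ((lam 1 • (1 : H →L[ℝ] H)).prod (eta 1 • (1 : H →L[ℝ] H)))

/-- `Û₁ b = (W₁ b + λ₁ b, η₁ b)`. -/
def Uhat1b (W : ℕ → H →L[ℝ] H) (lam eta : ℕ → ℝ) : H →L[ℝ] WithLp 2 (H × H) :=
  ((WithLp.prodContinuousLinearEquiv 2 ℝ H H).symm.toContinuousLinearMap).comp
    ((W 1 + lam 1 • (1 : H →L[ℝ] H)).prod (eta 1 • (1 : H →L[ℝ] H)))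

/-- The chain `Qₙ ∘ Uₙ ∘ ⋯ ∘ Q₂ ∘ U₂ ∘ Q₁ ∘ Û₁` (for `n ≥ 1`), fed with an input in `H`. -/
def midNet (U : ℕ → WithLp 2 (H × H) →L[ℝ] WithLp 2 (H × H))
    (Q : ℕ → WithLp 2 (H × H) → WithLp 2 (H × H)) (U1 : H → WithLp 2 (H × H)) :
    ℕ → (H → WithLp 2 (H × H))
  | 0 => U1
  | 1 => fun b => Q 1 (U1 b)
  | n + 2 => fun b => Q (n + 2) (U (n + 2) (midNet U Q U1 (n + 1) b))

/-- Twice the largest eigenvalue of `Mᵀ M`, where `M = !![a, t; 0, d]`. -/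
def topEig (a d t : ℝ) : ℝ :=
  a ^ 2 + d ^ 2 + t ^ 2 + Real.sqrt ((a ^ 2 + d ^ 2 + t ^ 2) ^ 2 - 4 * a ^ 2 * d ^ 2)

/-- With `μ = topEig a d t / 2`, these are `det (μ - MᵀM) = 0`, nonnegativity of the diagonal of
`μ - MᵀM`, and nonnegativity of `μ`. -/
lemma topEig_spec (a d t : ℝ) :
    (topEig a d t / 2 - a ^ 2) * (topEig a d t / 2 - (t ^ 2 + d ^ 2)) = (a * t) ^ 2 ∧
      0 ≤ topEig a d t / 2 - a ^ 2 ∧ 0 ≤ topEig a d t / 2 - (t ^ 2 + d ^ 2) ∧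
      0 ≤ topEig a d t / 2 := by
  -- the discriminant is `(a² - (t² + d²))² + 4 a² t²`
  have hD : (a ^ 2 - (t ^ 2 + d ^ 2)) ^ 2 ≤ (a ^ 2 + d ^ 2 + t ^ 2) ^ 2 - 4 * a ^ 2 * d ^ 2 := by
    nlinarith [sq_nonneg (a * t)]
  have hs := Real.sq_sqrt ((sq_nonneg _).trans hD)
  have habs := Real.abs_le_sqrt hD
  obtain ⟨h1, h2⟩ := abs_le.mp habs
  have h0 := Real.sqrt_nonneg ((a ^ 2 + d ^ 2 + t ^ 2) ^ 2 - 4 * a ^ 2 * d ^ 2)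
  unfold topEig
  generalize Real.sqrt ((a ^ 2 + d ^ 2 + t ^ 2) ^ 2 - 4 * a ^ 2 * d ^ 2) = s at *
  refine ⟨?_, by linarith, by linarith, by positivity⟩
  linear_combination hs / 4

lemma quad_le (a d t x b : ℝ) :
    (a * x + t * b) ^ 2 + (d * b) ^ 2 ≤ topEig a d t / 2 * (x ^ 2 + b ^ 2) := by
  obtain ⟨h1, h2, h3, -⟩ := topEig_spec a d t
  generalize topEig a d t / 2 = μ at *
  rcases h2.eq_or_lt with h | h
  · have hat : a * t = 0 := by
      rw [← h, zero_mul] at h1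
      exact pow_eq_zero_iff (two_ne_zero) |>.mp h1.symm
    nlinarith [mul_nonneg h3 (sq_nonneg b), congrArg (· * (x * b)) hat, congrArg (· * x ^ 2) h]
  · -- multiplying the form by the pivot `μ - a²` completes the square
    have key : (μ - a ^ 2) * (μ * (x ^ 2 + b ^ 2) - ((a * x + t * b) ^ 2 + (d * b) ^ 2))
        = ((μ - a ^ 2) * x - a * t * b) ^ 2 := by
      linear_combination b ^ 2 * h1
    have := nonneg_of_mul_nonneg_right (key ▸ sq_nonneg _) h
    linarith

lemma exists_quad_eq (a d t : ℝ) : ∃ x b : ℝ, 0 < x ^ 2 + b ^ 2 ∧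
    (a * x + t * b) ^ 2 + (d * b) ^ 2 = topEig a d t / 2 * (x ^ 2 + b ^ 2) := by
  obtain ⟨h1, h2, h3, -⟩ := topEig_spec a d t
  generalize topEig a d t / 2 = μ at *
  rcases h2.eq_or_lt with h | h
  · exact ⟨1, 0, by norm_num, by linear_combination h⟩
  · -- the kernel vector of the first row of `μ - MᵀM`
    refine ⟨a * t, μ - a ^ 2, by positivity, ?_⟩
    linear_combination -(μ - a ^ 2) * h1

lemma inner_diag (v : HilbertBasis ℕ ℝ H) (A : H →L[ℝ] H) (c : ℕ → ℝ)
    (hA : ∀ p, A (v p) = c p • v p) (p : ℕ) (x : H) :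
    inner ℝ (v p) (A x) = c p * inner ℝ (v p) x := by
  have h : (innerSL ℝ (v p)).comp A = c p • innerSL ℝ (v p) := by
    refine ContinuousLinearMap.ext_on (s := Set.range v) 
      (Submodule.dense_iff_topologicalClosure_eq_top.mpr v.dense_span) ?_
    rintro _ ⟨q, rfl⟩
    by_cases hq : p = q
    · subst hq; simp [hA]
    · simp [hA, v.orthonormal.inner_eq_zero hq]
  simpa using DFunLike.congr_fun h x

lemma norm_sq_hasSum (v : HilbertBasis ℕ ℝ H) (x : H) :
    HasSum (fun p => inner ℝ (v p) x ^ 2) (‖x‖ ^ 2) := by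
  have h := v.hasSum_inner_mul_inner x x
  simpa only [real_inner_self_eq_norm_sq, real_inner_comm, ← sq] using h

lemma betaT_succ (beta : ℕ → ℕ → ℝ) (lam eta : ℕ → ℝ) (n p : ℕ) (hn : 1 ≤ n) :
    betaT beta lam eta 1 (n + 1) p
      = beta (n + 1) p * betaT beta lam eta 1 n p + lam (n + 1) * etaP eta 1 n := by
  obtain ⟨k, rfl⟩ : ∃ k, n = k + 1 := ⟨n - 1, by omega⟩
  simp only [betaT, Nat.add_sub_cancel]
  rw [Finset.sum_Icc_succ_top (by omega), mul_add, Finset.mul_sum]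
  congr 2
  · refine Finset.sum_congr rfl fun j hj => ?_
    rw [Finset.mem_Icc] at hj
    rw [Finset.prod_Icc_succ_top (by omega)]
    ring
  · simp
    ring

/-- The matrix of `Uₙ ∘ ⋯ ∘ U₁` on the `p`-th coordinates. -/
lemma inner_opComp (m : ℕ) (v : HilbertBasis ℕ ℝ H)
    (W : ℕ → H →L[ℝ] H) (beta : ℕ → ℕ → ℝ) (lam eta : ℕ → ℝ)
    (hW : ∀ n, 1 ≤ n → n ≤ m → ∀ p : ℕ, W n (v p) = beta n p • v p)
    (z : WithLp 2 (H × H)) (n : ℕ) (h1 : 1 ≤ n) (hn : n ≤ m) :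
    (∀ p, inner ℝ (v p) (opComp (Uop W lam eta) 1 n z).fst
      = betaC beta 1 n p * inner ℝ (v p) z.fst
        + betaT beta lam eta 1 n p * inner ℝ (v p) z.snd) ∧
    (opComp (Uop W lam eta) 1 n z).snd = etaP eta 1 n • z.snd := by
  have hfst : ∀ n (y : WithLp 2 (H × H)), (Uop W lam eta n y).fst = W n y.fst + lam n • y.snd :=
    fun _ _ => rfl
  have hsnd : ∀ n (y : WithLp 2 (H × H)), (Uop W lam eta n y).snd = eta n • y.snd :=
    fun _ _ => rfl
  induction n, h1 using Nat.le_induction with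
  | base =>
    have h : opComp (Uop W lam eta) 1 1 z = Uop W lam eta 1 z := by simp [opComp]
    rw [h, hfst, hsnd]
    refine ⟨fun p => ?_, by simp [etaP]⟩
    rw [inner_add_right, inner_diag v _ _ (hW 1 le_rfl hn), inner_smul_right]
    simp [betaC, betaT, etaP]
  | succ n h1 ih =>
    obtain ⟨ih1, ih2⟩ := ih (by omega)
    have h : opComp (Uop W lam eta) 1 (n + 1) z
        = Uop W lam eta (n + 1) (opComp (Uop W lam eta) 1 n z) := by simp [opComp]
    rw [h, hfst, hsnd, ih2]
    refine ⟨fun p => ?_, ?_⟩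
    · rw [inner_add_right, inner_diag v _ _ (hW (n + 1) (by omega) hn), inner_smul_right,
        inner_smul_right, ih1, betaT_succ _ _ _ _ _ h1]
      simp only [betaC]
      rw [Finset.prod_Icc_succ_top (by omega)]
      ring
    · simp only [etaP]
      rw [Finset.prod_Icc_succ_top (by omega), smul_smul, mul_comm]

lemma normP_hasSum (v : HilbertBasis ℕ ℝ H) (z : WithLp 2 (H × H)) :
    HasSum (fun p => inner ℝ (v p) z.fst ^ 2 + inner ℝ (v p) z.snd ^ 2) (‖z‖ ^ 2) := by
  rw [WithLp.prod_norm_sq_eq_of_L2]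
  exact (norm_sq_hasSum v _).add (norm_sq_hasSum v _)

theorem statement6 (m : ℕ) (hm : 1 ≤ m) [CompleteSpace H]
    (v : HilbertBasis ℕ ℝ H)
    (W : ℕ → H →L[ℝ] H) (beta : ℕ → ℕ → ℝ) (lam eta : ℕ → ℝ)
    (hW : ∀ n, 1 ≤ n → n ≤ m → ∀ p : ℕ, W n (v p) = beta n p • v p)
    (hlam : ∀ n, 1 ≤ n → n ≤ m → 0 < lam n)
    (heta : ∀ n, 1 ≤ n → n ≤ m → 0 < eta n)
    (γ : ℝ) :
    ‖opComp (Uop W lam eta) 1 m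
        - γ • (1 : WithLp 2 (H × H) →L[ℝ] WithLp 2 (H × H))‖ ^ 2
      = (1 / 2) * ⨆ p : ℕ,
          ((betaC beta 1 m p - γ) ^ 2 + (etaP eta 1 m - γ) ^ 2 + betaT beta lam eta 1 m p ^ 2
            + Real.sqrt (((betaC beta 1 m p - γ) ^ 2 + (etaP eta 1 m - γ) ^ 2
                  + betaT beta lam eta 1 m p ^ 2) ^ 2
                - 4 * (betaC beta 1 m p - γ) ^ 2 * (etaP eta 1 m - γ) ^ 2)) := by
  set T := opComp (Uop W lam eta) 1 m
        - γ • (1 : WithLp 2 (H × H) →L[ℝ] WithLp 2 (H × H)) with hT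
  set g : ℕ → ℝ := fun p =>
    topEig (betaC beta 1 m p - γ) (etaP eta 1 m - γ) (betaT beta lam eta 1 m p) with hg
  change ‖T‖ ^ 2 = 1 / 2 * ⨆ p, g p
  have hcoord (z : WithLp 2 (H × H)) : HasSum (fun p =>
      ((betaC beta 1 m p - γ) * inner ℝ (v p) z.fst
        + betaT beta lam eta 1 m p * inner ℝ (v p) z.snd) ^ 2
      + ((etaP eta 1 m - γ) * inner ℝ (v p) z.snd) ^ 2) (‖T z‖ ^ 2) := by
    obtain ⟨h1, h2⟩ := inner_opComp m v W beta lam eta hW z m hm le_rfl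
    have hf : (T z).fst = (opComp (Uop W lam eta) 1 m z).fst - γ • z.fst := rfl
    have hs : (T z).snd = (opComp (Uop W lam eta) 1 m z).snd - γ • z.snd := rfl
    convert normP_hasSum v (T z) using 2 with p
    rw [hf, hs, h2, inner_sub_right, inner_sub_right, h1, inner_smul_right, inner_smul_right,
      inner_smul_right]
    ring
  have hlow (p : ℕ) : g p / 2 ≤ ‖T‖ ^ 2 := by
    obtain ⟨x, b, hpos, heq⟩ := exists_quad_eq (betaC beta 1 m p - γ) (etaP eta 1 m - γ)
      (betaT beta lam eta 1 m p)
    let z : WithLp 2 (H × H) := WithLp.toLp 2 (x • v p, b • v p)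
    have hvp : ‖v p‖ = 1 := v.orthonormal.1 p
    have hz : ‖z‖ ^ 2 = x ^ 2 + b ^ 2 := by
      rw [WithLp.prod_norm_sq_eq_of_L2]
      simp [z, norm_smul, hvp]
    have hTz : ‖T z‖ ^ 2 = g p / 2 * (x ^ 2 + b ^ 2) := by
      refine (hcoord z).unique ?_
      rw [← heq]
      convert hasSum_single p ?_ using 1
      · simp [z, inner_smul_right, hvp]
      · intro q hq
        simp [z, inner_smul_right, v.orthonormal.inner_eq_zero hq]
    have hle : ‖T z‖ ^ 2 ≤ ‖T‖ ^ 2 * ‖z‖ ^ 2 := by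
      rw [← mul_pow]
      gcongr
      exact T.le_opNorm z
    rw [hTz, hz] at hle
    exact le_of_mul_le_mul_right hle hpos
  have hbdd : BddAbove (Set.range g) := by
    refine ⟨2 * ‖T‖ ^ 2, ?_⟩
    rintro _ ⟨p, rfl⟩
    linarith [hlow p]
  refine le_antisymm ?_ ?_
  · have hC (p : ℕ) : g p / 2 ≤ 1 / 2 * ⨆ p, g p := by linarith [le_ciSup hbdd p]
    have hC0 : 0 ≤ 1 / 2 * ⨆ p, g p := (topEig_spec _ _ _).2.2.2.trans (hC 0)
    refine Real.le_sqrt (norm_nonneg _) hC0 |>.mp ?_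
    refine T.opNorm_le_bound (Real.sqrt_nonneg _) fun z => ?_
    refine le_of_sq_le_sq ?_ (by positivity)
    rw [mul_pow, Real.sq_sqrt hC0]
    refine hasSum_le (fun p => ?_) (hcoord z) ((normP_hasSum v z).mul_left _)
    exact (quad_le _ _ _ _ _).trans (mul_le_mul_of_nonneg_right (hC p) (by positivity))
  · have : ⨆ p, g p ≤ 2 * ‖T‖ ^ 2 := ciSup_le fun p => by linarith [hlow p]
    linarith
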